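/- Let B be the subalgebra of U_q(sl3) generated by K^{±1} = (K_1 K_2^{-1})^{±1}, B_1 = F_1 - c_1 E_2 K_1^{-1}, and B_2 = F_2 - c_2 E_1 K_2^{-1}, for nonzero scalars c_1, c_2. Then the quantum Serre-type relation B_1^2 B_2 - (q+q^{-1}) B_1 B_2 B_1 + B_2 B_1^2 = (q+q^{-1})(q c_2 K + q^{-2} c_1 K^{-1}) B_1 holds in U_q(sl3). -/

import Mathlib

noncomputable section

/-- The defining relations of `U_q(sl3)` inside a `ℂ`-algebra `R`, with real `q`. -/
structure UqSL3 (R : Type*) [Ring R] [Algebra ℂ R] (q : ℝ)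
    (E₁ E₂ F₁ F₂ K₁ K₁' K₂ K₂' : R) : Prop where
  K₁mul : K₁ * K₁' = 1
  K₁mul' : K₁' * K₁ = 1
  K₂mul : K₂ * K₂' = 1
  K₂mul' : K₂' * K₂ = 1
  Kcomm : K₁ * K₂ = K₂ * K₁
  Kcomm' : K₁ * K₂' = K₂' * K₁
  Kcomm'' : K₁' * K₂ = K₂ * K₁'
  KE11 : K₁ * E₁ = ((q:ℂ) ^ (2:ℤ)) • (E₁ * K₁)
  KE12 : K₁ * E₂ = ((q:ℂ) ^ (-1:ℤ)) • (E₂ * K₁)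
  KE21 : K₂ * E₁ = ((q:ℂ) ^ (-1:ℤ)) • (E₁ * K₂)
  KE22 : K₂ * E₂ = ((q:ℂ) ^ (2:ℤ)) • (E₂ * K₂)
  KF11 : K₁ * F₁ = ((q:ℂ) ^ (-2:ℤ)) • (F₁ * K₁)
  KF12 : K₁ * F₂ = ((q:ℂ) ^ (1:ℤ)) • (F₂ * K₁)
  KF21 : K₂ * F₁ = ((q:ℂ) ^ (1:ℤ)) • (F₁ * K₂)
  KF22 : K₂ * F₂ = ((q:ℂ) ^ (-2:ℤ)) • (F₂ * K₂)
  EF11 : E₁ * F₁ - F₁ * E₁ = ((q:ℂ) - (q:ℂ)⁻¹)⁻¹ • (K₁ - K₁')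
  EF22 : E₂ * F₂ - F₂ * E₂ = ((q:ℂ) - (q:ℂ)⁻¹)⁻¹ • (K₂ - K₂')
  EF12 : E₁ * F₂ = F₂ * E₁
  EF21 : E₂ * F₁ = F₁ * E₂
  serreE₁ : E₁ ^ 2 * E₂ - ((q:ℂ) + (q:ℂ)⁻¹) • (E₁ * E₂ * E₁) + E₂ * E₁ ^ 2 = 0
  serreE₂ : E₂ ^ 2 * E₁ - ((q:ℂ) + (q:ℂ)⁻¹) • (E₂ * E₁ * E₂) + E₁ * E₂ ^ 2 = 0
  serreF₁ : F₁ ^ 2 * F₂ - ((q:ℂ) + (q:ℂ)⁻¹) • (F₁ * F₂ * F₁) + F₂ * F₁ ^ 2 = 0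
  serreF₂ : F₂ ^ 2 * F₁ - ((q:ℂ) + (q:ℂ)⁻¹) • (F₂ * F₁ * F₂) + F₁ * F₂ ^ 2 = 0
/-- An element commuting with an invertible `k` up to a nonzero scalar commutes with the inverse of
`k` up to the inverse scalar. -/
theorem inv_mul_eq_smul_of_mul_eq_smul {R : Type*} [Ring R] [Algebra ℂ R] {k k' e : R} {c : ℂ}
    (hc : c ≠ 0) (hk : k * k' = 1) (hk' : k' * k = 1) (h : k * e = c • (e * k)) :
    k' * e = c⁻¹ • (e * k') := by
  have h₁ : e * k' = c • (k' * e) := by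
    calc e * k' = k' * (k * e) * k' := by rw [← mul_assoc, hk', one_mul]
      _ = c • (k' * e) := by
        rw [h, mul_smul_comm, smul_mul_assoc, mul_assoc, mul_assoc, hk, mul_one]
  rw [h₁, smul_smul, inv_mul_cancel₀ hc, one_smul]

/-- Right multiplication by a further factor of a scalar commutation relation. -/
theorem mul_mul_eq_smul_of_mul_eq_smul {R : Type*} [Ring R] [Algebra ℂ R] {a b d : R} {c : ℂ}
    (h : a * b = c • d) (z : R) : a * (b * z) = c • (d * z) := by
  rw [← mul_assoc, h, smul_mul_assoc]

/-- The Serre-type relation for `x + y` and `u + v`, where `x, u` and `y, v` satisfy quantum Serre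
relations and the mixed commutators are controlled by the elements `P, N, M`. -/
theorem serre_of_mixed_relations {R : Type*} [Ring R] [Algebra ℂ R] {p a b : ℂ} (hp : p ≠ 0)
    (hp2 : p ^ 2 - 1 ≠ 0) {x y u v P N M : R}
    (hyx : y * x = p ^ 2 • (x * y))
    (hvx : v * x = p⁻¹ • (x * v + (p - p⁻¹)⁻¹ • (P - M)))
    (hyu : y * u = p⁻¹ • (u * y + (p - p⁻¹)⁻¹ • (N - M)))
    (hPx : P * x = (p ^ 3)⁻¹ • (x * P)) (hPy : P * y = (p ^ 3)⁻¹ • (y * P))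
    (hNx : N * x = p ^ 3 • (x * N)) (hNy : N * y = p ^ 3 • (y * N))
    (hMx : M * x = p • (x * M)) (hMy : M * y = p⁻¹ • (y * M))
    (hu : x ^ 2 * u - (p + p⁻¹) • (x * u * x) + u * x ^ 2 = 0)
    (hv : y ^ 2 * v - (p + p⁻¹) • (y * v * y) + v * y ^ 2 = 0) :
    (x - a • y) ^ 2 * (u - b • v) - (p + p⁻¹) • ((x - a • y) * (u - b • v) * (x - a • y))
      + (u - b • v) * (x - a • y) ^ 2
    = (p + p⁻¹) • (((p * b) • P + ((p ^ 2)⁻¹ * a) • N) * (x - a • y)) := by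
  have hyx' := mul_mul_eq_smul_of_mul_eq_smul hyx
  have hvx' := mul_mul_eq_smul_of_mul_eq_smul hvx
  have hyu' := mul_mul_eq_smul_of_mul_eq_smul hyu
  have hd : p - p⁻¹ ≠ 0 := by
    intro h
    apply hp2
    rw [sub_eq_zero] at h
    rw [pow_two, sub_eq_zero]
    nth_rw 2 [h]
    exact mul_inv_cancel₀ hp
  obtain ⟨s, hs⟩ : ∃ s, s = (p - p⁻¹)⁻¹ := ⟨_, rfl⟩
  have hs' : s = p / (p ^ 2 - 1) := by
    rw [hs]; field_simp
  simp only [← hs] at hvx hyu hvx' hyu'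
  simp only [pow_two x, pow_two y, mul_assoc] at hu hv
  rw [← sub_eq_zero]
  have key := congrArg₂ (fun s t : R => s - (a ^ 2 * b) • t) hu hv
  simp only [smul_zero, sub_zero] at key
  rw [← key]
  simp only [pow_two (_ : R), mul_sub, sub_mul, mul_add, add_mul, mul_smul_comm, smul_mul_assoc,
    mul_assoc, hyx, hyx', hvx, hvx', hyu, hyu', hPx, hPy, hNx, hNy, hMx, hMy, smul_add, smul_sub]
  match_scalars <;> (try rw [hs']) <;> field_simp <;> ring

theorem stmt {R : Type*} [Ring R] [Algebra ℂ R] (q : ℝ) (hq0 : 0 < q) (hq1 : q < 1)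
    (c₁ c₂ : ℂ) (hc₁ : c₁ ≠ 0) (hc₂ : c₂ ≠ 0)
    (E₁ E₂ F₁ F₂ K₁ K₁' K₂ K₂' : R)
    (h : UqSL3 R q E₁ E₂ F₁ F₂ K₁ K₁' K₂ K₂') :
    (F₁ - c₁ • (E₂ * K₁')) ^ 2 * (F₂ - c₂ • (E₁ * K₂'))
      - ((q:ℂ) + (q:ℂ)⁻¹) • ((F₁ - c₁ • (E₂ * K₁')) * (F₂ - c₂ • (E₁ * K₂')) * (F₁ - c₁ • (E₂ * K₁')))
      + (F₂ - c₂ • (E₁ * K₂')) * (F₁ - c₁ • (E₂ * K₁')) ^ 2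
    = ((q:ℂ) + (q:ℂ)⁻¹) •
        ((((q:ℂ) * c₂) • (K₁ * K₂') + (((q:ℂ) ^ (-2:ℤ)) * c₁) • (K₁' * K₂))
          * (F₁ - c₁ • (E₂ * K₁'))) := by
  have hp : (q : ℂ) ≠ 0 := by exact_mod_cast hq0.ne'
  have hp2 : (q : ℂ) ^ 2 - 1 ≠ 0 := by
    have h' : q ^ 2 - 1 ≠ 0 := by nlinarith
    exact_mod_cast h'
  obtain ⟨K₁mul, K₁mul', K₂mul, K₂mul', -, -, Kcomm'', KE11, KE12, -, KE22, KF11, KF12,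
    KF21, -, EF11, EF22, -, EF21, -, serreE₂, serreF₁, -⟩ := h
  have hz (n : ℤ) : (q : ℂ) ^ n ≠ 0 := zpow_ne_zero n hp
  have LE11 := inv_mul_eq_smul_of_mul_eq_smul (hz _) K₁mul K₁mul' KE11
  have LE12 := inv_mul_eq_smul_of_mul_eq_smul (hz _) K₁mul K₁mul' KE12
  have LE22 := inv_mul_eq_smul_of_mul_eq_smul (hz _) K₂mul K₂mul' KE22
  have LF11 := inv_mul_eq_smul_of_mul_eq_smul (hz _) K₁mul K₁mul' KF11
  have LF12 := inv_mul_eq_smul_of_mul_eq_smul (hz _) K₁mul K₁mul' KF12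
  have LF21 := inv_mul_eq_smul_of_mul_eq_smul (hz _) K₂mul K₂mul' KF21
  have Lcomm : K₂' * K₁' = K₁' * K₂' := by
    have h₁ := inv_mul_eq_smul_of_mul_eq_smul (c := 1) one_ne_zero K₂mul K₂mul'
      (e := K₁') (by rw [one_smul, Kcomm''])
    simpa using h₁
  have EF11' : E₁ * F₁ = F₁ * E₁ + ((q : ℂ) - (q : ℂ)⁻¹)⁻¹ • (K₁ - K₁') := by rw [← EF11]; abel
  have EF22' : E₂ * F₂ = F₂ * E₂ + ((q : ℂ) - (q : ℂ)⁻¹)⁻¹ • (K₂ - K₂') := by rw [← EF22]; abel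
  have hzn : (q : ℂ) ^ (-2 : ℤ) = ((q : ℂ) ^ 2)⁻¹ := by rw [zpow_neg]; rfl
  have hzp : (q : ℂ) ^ (2 : ℤ) = (q : ℂ) ^ 2 := rfl
  simp only [hzn, hzp, zpow_neg, zpow_one, inv_inv] at *
  have KE12m := mul_mul_eq_smul_of_mul_eq_smul KE12
  have LE11m := mul_mul_eq_smul_of_mul_eq_smul LE11
  have LE12m := mul_mul_eq_smul_of_mul_eq_smul LE12
  have LE22m := mul_mul_eq_smul_of_mul_eq_smul LE22
  have KE22m := mul_mul_eq_smul_of_mul_eq_smul KE22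
  have Lcommm (z : R) : K₂' * (K₁' * z) = K₁' * (K₂' * z) := by
    rw [← mul_assoc, Lcomm, mul_assoc]
  apply serre_of_mixed_relations (M := K₁' * K₂') hp hp2
  · rw [mul_assoc, LF11, mul_smul_comm, ← mul_assoc, EF21, mul_assoc]
  · rw [mul_assoc, LF21, mul_smul_comm, ← mul_assoc, EF11', add_mul, smul_mul_assoc, sub_mul,
      mul_assoc]
  · rw [mul_assoc, LF12, mul_smul_comm, ← mul_assoc, EF22', add_mul, smul_mul_assoc, sub_mul,
      mul_assoc, Lcomm, Kcomm'']
  · simp only [mul_assoc, LF21, mul_smul_comm, mul_mul_eq_smul_of_mul_eq_smul KF11]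
    module
  · simp only [mul_assoc, LE22m, mul_smul_comm, KE12m, Lcomm]
    simp only [← mul_assoc K₁ K₁', ← mul_assoc K₁' K₁, K₁mul, K₁mul', one_mul]
    match_scalars
    field_simp
  · simp only [mul_assoc, KF21, mul_smul_comm, mul_mul_eq_smul_of_mul_eq_smul LF11]
    module
  · simp only [mul_assoc, KE22m, mul_smul_comm, LE12m, ← Kcomm'']
    module
  · simp only [mul_assoc, LF21, mul_smul_comm, mul_mul_eq_smul_of_mul_eq_smul LF11]
    match_scalars
    field_simp
  · simp only [mul_assoc, LE22m, mul_smul_comm, LE12m, Lcomm]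
    match_scalars
    field_simp
  · exact serreF₁
  · have h₁ := congrArg (fun z => ((q : ℂ) ^ 3)⁻¹ • (z * (K₁' * (K₁' * K₂')))) serreE₂
    simp only [zero_mul, smul_zero] at h₁
    rw [← h₁]
    simp only [pow_two (_ : R), mul_assoc, mul_smul_comm, smul_mul_assoc, LE11m, LE12m, LE22m,
      sub_mul, add_mul, Lcomm, Lcommm]
    match_scalars <;> field_simp
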